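/- Let F : ℝ⁴ → ℝ⁴ be the map (x¹,x²,y¹,y²) ↦ (u₃¹, u₃², u₄¹, u₄²) with u₃¹ = x¹ + y¹ + (1/2)(x¹)²y², u₃² = x² + y² − (1/2)x¹(y²)², u₄¹ = −x¹ + y¹ + (1/2)(x¹)²y², u₄² = x² − y² − (1/2)x¹(y²)². Then the determinant of the Jacobian matrix (total Fréchet derivative) of F is identically equal to −4 on all of ℝ⁴; in particular the differentials du₃¹, du₃², du₄¹, du₄² are everywhere linearly independent, so the level foliations of u₃ = (u₃¹,u₃²) and u₄ = (u₄¹,u₄²) are everywhere transversal. -/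

import Mathlib

/-!
In the adapted coordinates `X = x¹`, `Y = x² - ½ x¹ (y²)²`, `Z = y¹ + ½ (x¹)² y²`, `W = y²`, the
two foliations become linear: `u₃ = (Z + X, Y + W)` and `u₄ = (Z - X, Y - W)`. Hence the Jacobian
of `F` is a constant matrix of determinant `-4` times the Jacobian of the coordinate change. The
latter adds to the fibre coordinates `x²`, `y¹` functions of the base coordinates `x¹`, `y²` only,
so it preserves volume.
-/

noncomputable section

/- Coordinates on ℝ⁴ = (Fin 4 → ℝ) are indexed as
   0 ↦ x¹, 1 ↦ x², 2 ↦ y¹, 3 ↦ y². -/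

/-- `u₃¹ = x¹ + y¹ + (1/2)(x¹)²y²`. -/
def u31 : (Fin 4 → ℝ) → ℝ := fun p => p 0 + p 2 + (1/2) * (p 0)^2 * p 3

/-- `u₃² = x² + y² − (1/2)x¹(y²)²`. -/
def u32 : (Fin 4 → ℝ) → ℝ := fun p => p 1 + p 3 - (1/2) * p 0 * (p 3)^2

/-- `u₄¹ = −x¹ + y¹ + (1/2)(x¹)²y²`. -/
def u41 : (Fin 4 → ℝ) → ℝ := fun p => -p 0 + p 2 + (1/2) * (p 0)^2 * p 3

/-- `u₄² = x² − y² − (1/2)x¹(y²)²`. -/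
def u42 : (Fin 4 → ℝ) → ℝ := fun p => p 1 - p 3 - (1/2) * p 0 * (p 3)^2

/-- The Jacobian matrix of `F = (u₃¹, u₃², u₄¹, u₄²)` at a point:
entry `(i, j)` is the partial derivative of the `i`-th component in the
`j`-th coordinate direction. -/
def jacobianF (pt : Fin 4 → ℝ) : Matrix (Fin 4) (Fin 4) ℝ :=
  Matrix.of fun i j => fderiv ℝ (![u31, u32, u41, u42] i) pt (Pi.single j 1)

theorem linearIndependent_of_det_pairing_ne_zero {ι R M N : Type*} [Fintype ι] [DecidableEq ι]
    [CommRing R] [IsDomain R] [AddCommMonoid M] [Module R M] [AddCommMonoid N] [Module R N]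
    (B : M →ₗ[R] N →ₗ[R] R) (v : ι → M) (w : ι → N)
    (h : (Matrix.of fun i j => B (v i) (w j)).det ≠ 0) : LinearIndependent R v :=
  LinearIndependent.of_comp (LinearMap.pi fun j => B.flip (w j))
    (Matrix.linearIndependent_rows_of_det_ne_zero h)

theorem fderiv_mulVec_apply_single {𝕜 l m n : Type*} [NontriviallyNormedField 𝕜] [CompleteSpace 𝕜]
    [Fintype m] [Fintype n] [DecidableEq n]
    (A : Matrix l m 𝕜) {S : Matrix m n 𝕜} {g : (n → 𝕜) → m → 𝕜} {x : n → 𝕜}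
    (hg : HasFDerivAt g S.mulVecLin.toContinuousLinearMap x) (i : l) (j : n) :
    fderiv 𝕜 (fun y => (A.mulVec (g y)) i) x (Pi.single j 1) = (A * S) i j := by
  have hA := ((LinearMap.proj i).comp A.mulVecLin).toContinuousLinearMap.hasFDerivAt.comp x hg
  calc
    fderiv 𝕜 (fun y => (A.mulVec (g y)) i) x (Pi.single j 1)
        = (A.mulVec (S.mulVec (Pi.single j 1))) i :=
      DFunLike.congr_fun (HasFDerivAt.fderiv hA) (Pi.single j 1)
    _ = (A * S) i j := by rw [Matrix.mulVec_mulVec, Matrix.mulVec_single_one, Matrix.col_apply]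

/-- The coordinates `(x¹, x² - ½ x¹ (y²)², y¹ + ½ (x¹)² y², y²)`, in which the functions
`u₃` and `u₄` become linear. -/
def adaptedCoords (p : Fin 4 → ℝ) : Fin 4 → ℝ :=
  ![p 0, p 1 - (1/2) * p 0 * (p 3)^2, p 2 + (1/2) * (p 0)^2 * p 3, p 3]

/-- The Jacobian matrix of `adaptedCoords`. -/
def adaptedJacobian (p : Fin 4 → ℝ) : Matrix (Fin 4) (Fin 4) ℝ :=
  !![1, 0, 0, 0;
     -((1/2) * (p 3)^2), 1, 0, -(p 0 * p 3);
     p 0 * p 3, 0, 1, (1/2) * (p 0)^2;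
     0, 0, 0, 1]

/-- The matrix expressing `(u₃¹, u₃², u₄¹, u₄²)` linearly in terms of `adaptedCoords`. -/
def webMatrix : Matrix (Fin 4) (Fin 4) ℝ :=
  !![1, 0, 1, 0;
     0, 1, 0, 1;
     -1, 0, 1, 0;
     0, 1, 0, -1]

theorem web_eq_webMatrix_mulVec (i : Fin 4) :
    ![u31, u32, u41, u42] i = fun p => (webMatrix.mulVec (adaptedCoords p)) i := by
  funext p
  fin_cases i <;>
    simp [u31, u32, u41, u42, webMatrix, adaptedCoords, Matrix.mulVec, dotProduct,
      Fin.sum_univ_four, sub_eq_add_neg, add_assoc, add_comm, add_left_comm]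

theorem hasFDerivAt_adaptedCoords (p : Fin 4 → ℝ) :
    HasFDerivAt adaptedCoords (adaptedJacobian p).mulVecLin.toContinuousLinearMap p := by
  have coord (i : Fin 4) := hasFDerivAt_apply (𝕜 := ℝ) (F' := fun _ => ℝ) i p
  have hY := (coord 1).sub (((coord 0).const_mul (1/2)).mul ((coord 3).pow 2))
  have hZ := (coord 2).add ((((coord 0).pow 2).const_mul (1/2)).mul (coord 3))
  refine hasFDerivAt_pi'.2 fun i => ?_
  fin_cases i
  · refine (coord 0).congr_fderiv (ContinuousLinearMap.ext fun v => ?_)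
    simp [adaptedJacobian, dotProduct, Fin.sum_univ_four]
  · refine hY.congr_fderiv (ContinuousLinearMap.ext fun v => ?_)
    suffices v 1 - (2⁻¹ * p 0 * (2 * p 3 * v 3) + p 3 ^ 2 * (2⁻¹ * v 0)) =
        -(2⁻¹ * p 3 ^ 2 * v 0) + v 1 + -(p 0 * p 3 * v 3) by
      simpa [adaptedJacobian, dotProduct, Fin.sum_univ_four]
    ring
  · refine hZ.congr_fderiv (ContinuousLinearMap.ext fun v => ?_)
    suffices v 2 + (2⁻¹ * p 0 ^ 2 * v 3 + p 3 * (2⁻¹ * (2 * p 0 * v 0))) =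
        p 0 * p 3 * v 0 + v 2 + 2⁻¹ * p 0 ^ 2 * v 3 by
      simpa [adaptedJacobian, dotProduct, Fin.sum_univ_four]
    ring
  · refine (coord 3).congr_fderiv (ContinuousLinearMap.ext fun v => ?_)
    simp [adaptedJacobian, dotProduct, Fin.sum_univ_four]

theorem jacobianF_eq_mul (p : Fin 4 → ℝ) : jacobianF p = webMatrix * adaptedJacobian p := by
  ext i j
  rw [jacobianF, Matrix.of_apply, web_eq_webMatrix_mulVec]
  exact fderiv_mulVec_apply_single webMatrix (hasFDerivAt_adaptedCoords p) i j

theorem det_webMatrix : webMatrix.det = -4 := by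
  suffices (-1 : ℝ) + -1 + (-1 + -1) = -4 by
    simpa [webMatrix, Matrix.det_succ_row_zero, Fin.sum_univ_succ, Fin.succAbove]
  norm_num

theorem det_adaptedJacobian (p : Fin 4 → ℝ) : (adaptedJacobian p).det = 1 := by
  simp [adaptedJacobian, Matrix.det_succ_row_zero, Fin.sum_univ_succ, Fin.succAbove]

/-- The Jacobian determinant of `F = (u₃¹, u₃², u₄¹, u₄²)` is identically `−4`
on all of ℝ⁴; in particular the differentials `du₃¹, du₃², du₄¹, du₄²` are
everywhere linearly independent. -/
theorem jacobian_det_eq_neg_four (pt : Fin 4 → ℝ) :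
    (jacobianF pt).det = -4 ∧
    LinearIndependent ℝ
      ![fderiv ℝ u31 pt, fderiv ℝ u32 pt, fderiv ℝ u41 pt, fderiv ℝ u42 pt] := by
  have hdet : (jacobianF pt).det = -4 := by
    rw [jacobianF_eq_mul, Matrix.det_mul, det_webMatrix, det_adaptedJacobian, mul_one]
  have hind : LinearIndependent ℝ fun i => fderiv ℝ (![u31, u32, u41, u42] i) pt :=
    linearIndependent_of_det_pairing_ne_zero (ContinuousLinearMap.coeLM ℝ) _
      (fun j => Pi.single j 1) (hdet.trans_ne (by norm_num))
  refine ⟨hdet, ?_⟩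
  convert hind using 1
  funext i
  fin_cases i <;> rfl

end
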